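/- Let H be a finite-dimensional complex inner product space, N ∈ ℕ, let X_1,…,X_N be pairwise commuting binary observables on H, let Z_1,…,Z_N be pairwise commuting binary observables on H, and let {1,…,N} = R ⊔ S be a partition. Fix ψ ∈ H and let Φ be the extracted global vector. Then for every u ∈ {0,1}^N supported on R and every v ∈ {0,1}^N supported on S: ⟨Φ, (Id_H ⊗ Id_{Q_N} ⊗ Π^σx_u Π^σz_v) Φ⟩ = 2^{−|R|} · Σ_{u' supported on R} ⟨ψ, Π^Z_v Z(u') Π^X_{u⊕u'} Z(u') Π^Z_v ψ⟩. (Equivalently, the probability of obtaining outcomes (u,v) when measuring the Pauli observables σx,i for i ∈ R and σz,i for i ∈ S on the reduced state of Φ on the third register equals the right-hand side.) -/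

import Mathlib

open scoped Matrix Kronecker ComplexConjugate

noncomputable section

/-- Bit vectors of length `N`, i.e. elements of `{0,1}^N`. -/
abbrev BV (N : ℕ) := Fin N → Bool

/-- The space `Q_N` of functions `{0,1}^N → ℂ`. -/
abbrev QV (N : ℕ) := BV N → ℂ

/-- Linear operators on `Q_N`, represented as matrices in the standard basis. -/
abbrev QOp (N : ℕ) := Matrix (BV N) (BV N) ℂ

/-- Bitwise XOR of bit vectors. -/
def bvXor {N : ℕ} (x r : BV N) : BV N := fun i => xor (x i) (r i)

/-- The sign `(-1)^{s·x}` where `s·x = Σ_i s_i x_i mod 2`. -/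
def bSign {N : ℕ} (s x : BV N) : ℂ :=
  (-1 : ℂ) ^ (Finset.univ.filter fun i => s i = true ∧ x i = true).card

/-- The standard basis vector `e_x` of `Q_N`. -/
def eVec {N : ℕ} (x : BV N) : QV N := fun y => if y = x then 1 else 0

/-- Tensor product of two vectors (as functions). -/
def tensVec {α β : Type*} (f : α → ℂ) (g : β → ℂ) : α × β → ℂ := fun p => f p.1 * g p.2

/-- The Pauli parity operator `σx(r)`, sending `e_x` to `e_{x ⊕ r}`. -/
def sigmaX {N : ℕ} (r : BV N) : QOp N :=
  Matrix.of fun y x => if y = bvXor x r then 1 else 0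

/-- The Pauli parity operator `σz(s)`, sending `e_x` to `(-1)^{s·x} e_x`. -/
def sigmaZ {N : ℕ} (s : BV N) : QOp N :=
  Matrix.diagonal fun x => bSign s x

/-- The scalar `2^{-N/2}`. -/
def invSqrt2pow (N : ℕ) : ℂ := (((Real.sqrt 2)⁻¹ : ℝ) : ℂ) ^ N

/-- The maximally entangled state `φ⁺_N = 2^{-N/2} Σ_x e_x ⊗ e_x`. -/
def phiPlus (N : ℕ) : BV N × BV N → ℂ :=
  invSqrt2pow N • ∑ x : BV N, tensVec (eVec x) (eVec x)

/-- The standard (complex) inner product on a finite function space. -/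
def qInner {α : Type*} [Fintype α] (f g : α → ℂ) : ℂ :=
  ∑ x, (starRingEnd ℂ) (f x) * g x

/-- The norm associated to `qInner`. -/
def qNorm {α : Type*} [Fintype α] (f : α → ℂ) : ℝ :=
  Real.sqrt (qInner f f).re

/-- A binary observable: a self-adjoint operator squaring to the identity. -/
def IsBinaryObs {ι : Type*} [Fintype ι] [DecidableEq ι] (O : Matrix ι ι ℂ) : Prop :=
  O.IsHermitian ∧ O * O = 1

/-- For pairwise commuting operators `X i`, the parity product `X(r) = ∏_{i : r_i = 1} X_i`. -/
def obsProd {n : ℕ} {ι : Type*} [Fintype ι] [DecidableEq ι]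
    (X : Fin n → Matrix ι ι ℂ) (hX : ∀ i j, Commute (X i) (X j)) (r : BV n) :
    Matrix ι ι ℂ :=
  (Finset.univ.filter fun i => r i = true).noncommProd X fun i _ j _ _ => hX i j

/-- The set of bit vectors supported on `R`. -/
def suppSet {N : ℕ} (R : Finset (Fin N)) : Finset (BV N) :=
  Finset.univ.filter fun u => ∀ i, u i = true → i ∈ R

/-- The projector `Π^{σx}_u = 2^{-|R|} Σ_{u' supported on R} (-1)^{u·u'} σx(u')`. -/
def projPauliX {N : ℕ} (R : Finset (Fin N)) (u : BV N) : QOp N :=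
  ((2 : ℂ) ^ R.card)⁻¹ • ∑ u' ∈ suppSet R, bSign u u' • sigmaX u'

/-- The projector `Π^{σz}_v = 2^{-|S|} Σ_{v' supported on S} (-1)^{v·v'} σz(v')`. -/
def projPauliZ {N : ℕ} (S : Finset (Fin N)) (v : BV N) : QOp N :=
  ((2 : ℂ) ^ S.card)⁻¹ • ∑ v' ∈ suppSet S, bSign v v' • sigmaZ v'

/-- The projector `Π^X_u = 2^{-|R|} Σ_{u' supported on R} (-1)^{u·u'} X(u')`
for a family of commuting binary observables. -/
def projObs {N : ℕ} {ι : Type*} [Fintype ι] [DecidableEq ι]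
    (X : Fin N → Matrix ι ι ℂ) (hX : ∀ i j, Commute (X i) (X j))
    (R : Finset (Fin N)) (u : BV N) : Matrix ι ι ℂ :=
  ((2 : ℂ) ^ R.card)⁻¹ • ∑ u' ∈ suppSet R, bSign u u' • obsProd X hX u'

/-- The extracted global vector
`Φ = 2^{-N} Σ_{r,s} (X(r)Z(s) ⊗ σx(r)σz(s) ⊗ Id)(ψ ⊗ φ⁺_N)`. -/
def extractedVec {N : ℕ} {ι : Type*} [Fintype ι] [DecidableEq ι]
    (X Z : Fin N → Matrix ι ι ℂ)
    (hX : ∀ i j, Commute (X i) (X j)) (hZ : ∀ i j, Commute (Z i) (Z j))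
    (ψ : ι → ℂ) : ι × BV N × BV N → ℂ :=
  ((2 : ℂ) ^ N)⁻¹ • ∑ r : BV N, ∑ s : BV N,
    ((obsProd X hX r * obsProd Z hZ s) ⊗ₖ ((sigmaX r * sigmaZ s) ⊗ₖ (1 : QOp N))).mulVec
      (tensVec ψ (phiPlus N))


/-! Write `Π_x` for the joint spectral projectors of all the `Z_i`. The slice of `Φ` at
`e_y ⊗ e_x` is `2^{-N/2} X(y ⊕ x) Π_x ψ`, so the expectation of an operator `M` on the third
register is `⟨ψ, D(M) ψ⟩` with `D(M) = ∑_{x,x'} ⟨e_x, M e_{x'}⟩ Π_x X(x ⊕ x') Π_{x'}`. For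
`M = σx(w) Π^σz_v` with `w` supported on `R`, the surviving terms are `Π_{v ⊕ a ⊕ w} X(w) Π_{v ⊕ a}`
with `a` supported on `R`, and each `Π_{v ⊕ a}` factors into a projector of the `Z_i` on `R` and one
on `S`. By orthogonality of characters, selecting the pairs of `R`-projectors whose labels differ by
`w` amounts to averaging `(-1)^{u'·w} Z(u') X(w) Z(u')` over `u'` supported on `R`. Summing over `w`
against `(-1)^{u·w}` then turns `X(w)` into `Π^X_{u ⊕ u'}`. -/

section BitVectors

variable {N : ℕ} {R S : Finset (Fin N)}

theorem bvXor_comm (x y : BV N) : bvXor x y = bvXor y x := by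
  ext i; simp [bvXor, Bool.xor_comm]

theorem bvXor_assoc (x y z : BV N) : bvXor (bvXor x y) z = bvXor x (bvXor y z) := by
  ext i; simp [bvXor]

theorem bvXor_involutive (x : BV N) : Function.Involutive (bvXor x) := fun y => by
  ext i; simp [bvXor]

theorem bvXor_bvXor_bvXor_left (w x y : BV N) :
    bvXor (bvXor w x) (bvXor w y) = bvXor x y := by
  rw [bvXor_comm w x, bvXor_assoc, bvXor_involutive]

theorem eq_bvXor_iff {x y z : BV N} : x = bvXor y z ↔ z = bvXor x y := by
  rw [bvXor_comm x, ← (bvXor_involutive y).eq_iff, eq_comm]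

theorem mem_suppSet {x : BV N} : x ∈ suppSet R ↔ ∀ i, x i = true → i ∈ R := by
  simp [suppSet]

theorem suppSet_univ : suppSet (Finset.univ : Finset (Fin N)) = Finset.univ := by
  simp [suppSet]

theorem bvXor_mem_suppSet {x y : BV N} (hx : x ∈ suppSet R) (hy : y ∈ suppSet R) :
    bvXor x y ∈ suppSet R := by
  simp only [mem_suppSet, bvXor] at *
  grind

theorem bvXor_mem_suppSet_compl_iff {x y : BV N} (hx : x ∈ suppSet R) (hy : y ∈ suppSet R) :
    bvXor x y ∈ suppSet Rᶜ ↔ x = y := by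
  simp only [mem_suppSet, bvXor, Finset.mem_compl, funext_iff] at *
  refine forall_congr' fun i => ?_
  grind

theorem sum_suppSet_union {A : Type*} [AddCommMonoid A] (hRS : Disjoint R S) (f : BV N → A) :
    ∑ x ∈ suppSet (R ∪ S), f x = ∑ r ∈ suppSet R, ∑ s ∈ suppSet S, f (bvXor r s) := by
  rw [← Finset.sum_product' (suppSet R) (suppSet S) fun r s => f (bvXor r s)]
  refine (Finset.sum_nbij' (M := A) (fun p => bvXor p.1 p.2)
    (fun x => (fun i => if i ∈ R then x i else false, fun i => if i ∈ S then x i else false))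
    ?_ ?_ ?_ ?_ fun _ _ => rfl).symm
  all_goals simp only [Finset.mem_product, mem_suppSet, Finset.mem_union, bvXor, Prod.forall,
    Prod.mk.injEq, funext_iff]
  · grind
  · grind
  · rintro r s ⟨hr, hs⟩
    refine ⟨fun i => ?_, fun i => ?_⟩ <;>
      cases hri : r i <;> cases hsi : s i <;> grind [Finset.disjoint_left]
  · intro x hx i
    cases hxi : x i <;> grind [Finset.disjoint_left]

theorem sum_suppSet_bvXor {A : Type*} [AddCommMonoid A] (v : BV N) (f : BV N → A) :
    ∑ a ∈ suppSet R, f (bvXor v a) = ∑ x, if bvXor v x ∈ suppSet R then f x else 0 := by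
  rw [← Finset.sum_filter]
  exact Finset.sum_nbij' (bvXor v) (bvXor v) (by simp [bvXor_involutive v _]) (by simp)
    (by simp [bvXor_involutive v _]) (by simp [bvXor_involutive v _]) (by simp)

end BitVectors

section Characters

variable {N : ℕ} {R S : Finset (Fin N)}

theorem bSign_eq_prod (s x : BV N) :
    bSign s x = ∏ i, if s i = true ∧ x i = true then (-1 : ℂ) else 1 := by
  simp [bSign, Finset.prod_ite]

theorem bSign_comm (s x : BV N) : bSign s x = bSign x s := by
  simp only [bSign, and_comm]

theorem bSign_bvXor_right (s x y : BV N) : bSign s (bvXor x y) = bSign s x * bSign s y := by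
  simp only [bSign_eq_prod, ← Finset.prod_mul_distrib, bvXor]
  refine Finset.prod_congr rfl fun i _ => ?_
  grind

theorem bSign_bvXor_left (s t x : BV N) : bSign (bvXor s t) x = bSign s x * bSign t x := by
  simp only [bSign_comm _ x, bSign_bvXor_right]

theorem bSign_eq_one_of_disjoint (hRS : Disjoint R S) {s x : BV N} (hs : s ∈ suppSet R)
    (hx : x ∈ suppSet S) : bSign s x = 1 := by
  rw [mem_suppSet] at hs hx
  rw [bSign_eq_prod]
  exact Finset.prod_eq_one fun i _ =>
    if_neg fun h => Finset.disjoint_left.1 hRS (hs i h.1) (hx i h.2)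

theorem isSelfAdjoint_bSign (s x : BV N) : IsSelfAdjoint (bSign s x) := by
  simp [IsSelfAdjoint, bSign]

theorem suppSet_eq_piFinset (R : Finset (Fin N)) :
    suppSet R = Fintype.piFinset fun i => if i ∈ R then Finset.univ else {false} := by
  ext x
  rw [mem_suppSet, Fintype.mem_piFinset]
  refine forall_congr' fun i => ?_
  by_cases h : i ∈ R <;> simp [h]

theorem sum_suppSet_bSign (R : Finset (Fin N)) (x : BV N) :
    ∑ s ∈ suppSet R, bSign s x = if x ∈ suppSet Rᶜ then (2 : ℂ) ^ R.card else 0 := by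
  have sum_bit (i : Fin N) : ∑ b ∈ (if i ∈ R then Finset.univ else {false}),
      (if b = true ∧ x i = true then (-1 : ℂ) else 1)
        = if i ∈ R then (if x i = true then 0 else 2) else 1 := by
    by_cases h : i ∈ R <;> cases x i <;> simp [h]
  simp only [bSign_eq_prod, suppSet_eq_piFinset R]
  rw [← Finset.prod_univ_sum _ fun i b => if b = true ∧ x i = true then (-1 : ℂ) else 1]
  simp only [sum_bit, Finset.prod_ite_mem, Finset.univ_inter, mem_suppSet, Finset.mem_compl]
  split_ifs with h
  · rw [Finset.prod_congr rfl fun i hi => if_neg fun hx => h i hx hi, Finset.prod_const]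
  · push Not at h
    obtain ⟨i, hx, hi⟩ := h
    exact Finset.prod_eq_zero hi (if_pos hx)

theorem average_suppSet_bSign_mul (R : Finset (Fin N)) (x y : BV N) :
    ((2 : ℂ) ^ R.card)⁻¹ * ∑ s ∈ suppSet R, bSign s x * bSign s y
      = if bvXor x y ∈ suppSet Rᶜ then 1 else 0 := by
  simp only [← bSign_bvXor_right, sum_suppSet_bSign, mul_ite, mul_zero]
  simp

theorem average_suppSet_bSign_mul_of_mem {x y : BV N} (hx : x ∈ suppSet R)
    (hy : y ∈ suppSet R) :
    ((2 : ℂ) ^ R.card)⁻¹ * ∑ s ∈ suppSet R, bSign s x * bSign s y = if x = y then 1 else 0 := by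
  simp only [average_suppSet_bSign_mul, bvXor_mem_suppSet_compl_iff hx hy]

end Characters

section NoncommProd

variable {α M : Type*} [Monoid M]

theorem noncommProd_filter (s : Finset α) (p : α → Prop) [DecidablePred p]
    (f : α → M) (hf : (s.filter p : Set α).Pairwise (Function.onFun Commute f))
    (hite : (s : Set α).Pairwise (Function.onFun Commute fun a => if p a then f a else 1)) :
    (s.filter p).noncommProd f hf = s.noncommProd (fun a => if p a then f a else 1) hite := by
  classical
  have hsplit := Finset.filter_union_filter_not_eq p s
  rw [← Finset.noncommProd_congr hsplit (fun _ _ => rfl) (by rwa [hsplit]),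
    Finset.noncommProd_union_of_disjoint (Finset.disjoint_filter_filter_not s s p),
    Finset.noncommProd_eq_pow_card (s.filter fun a => ¬p a) _ _ 1
      fun a ha => if_neg (Finset.mem_filter.1 ha).2,
    one_pow, mul_one]
  exact Finset.noncommProd_congr rfl (fun a ha => (if_pos (Finset.mem_filter.1 ha).2).symm) _

theorem isSelfAdjoint_noncommProd [StarMul M] (s : Finset α) (f : α → M)
    (comm : (s : Set α).Pairwise (Function.onFun Commute f))
    (hf : ∀ a ∈ s, IsSelfAdjoint (f a)) : IsSelfAdjoint (s.noncommProd f comm) := by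
  induction s using Finset.cons_induction with
  | empty => simp
  | cons a s ha ih =>
    simp only [Finset.forall_mem_cons] at hf
    rw [Finset.noncommProd_cons]
    refine (hf.1.commute_iff (ih _ hf.2)).1 (Finset.noncommProd_commute _ _ _ _ fun b hb => ?_)
    exact comm (by simp) (by simp [hb]) (by rintro rfl; exact ha hb)

end NoncommProd

section Observables

variable {N : ℕ} {ι : Type*} [Fintype ι] [DecidableEq ι] {R S : Finset (Fin N)}
  (O : Fin N → Matrix ι ι ℂ) (hO : ∀ i j, Commute (O i) (O j))

theorem obsProd_bvXor (hsq : ∀ i, O i * O i = 1) (r s : BV N) :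
    obsProd O hO (bvXor r s) = obsProd O hO r * obsProd O hO s := by
  have comm_ite (r s : BV N) (i j : Fin N) :
      Commute (if r i = true then O i else 1) (if s j = true then O j else 1) := by
    split_ifs <;> simp [hO]
  have obsProd_eq (r : BV N) : obsProd O hO r = Finset.univ.noncommProd
      (fun i => if r i = true then O i else 1) fun i _ j _ _ => comm_ite r r i j :=
    noncommProd_filter _ _ _ _ _
  simp only [obsProd_eq]
  refine (Finset.noncommProd_congr rfl (fun i _ => ?_) _).trans
    (Finset.noncommProd_mul_distrib _ _ _ _ fun i _ j _ _ => comm_ite s r i j)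
  simp only [Pi.mul_apply, bvXor]
  grind

theorem isSelfAdjoint_obsProd (hself : ∀ i, IsSelfAdjoint (O i)) (r : BV N) :
    IsSelfAdjoint (obsProd O hO r) :=
  isSelfAdjoint_noncommProd _ _ _ fun i _ => hself i

theorem isSelfAdjoint_projObs (hself : ∀ i, IsSelfAdjoint (O i)) (R : Finset (Fin N))
    (u : BV N) : IsSelfAdjoint (projObs O hO R u) := by
  refine IsSelfAdjoint.smul (by simp [IsSelfAdjoint]) (isSelfAdjoint_sum _ fun s _ => ?_)
  exact (isSelfAdjoint_bSign u s).smul (isSelfAdjoint_obsProd O hO hself s)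

theorem obsProd_eq_sum_projObs {s : BV N} (hs : s ∈ suppSet R) :
    obsProd O hO s = ∑ a ∈ suppSet R, bSign s a • projObs O hO R a := by
  symm
  calc ∑ a ∈ suppSet R, bSign s a • projObs O hO R a
      = ∑ t ∈ suppSet R, (((2 : ℂ) ^ R.card)⁻¹ * ∑ a ∈ suppSet R, bSign a s * bSign a t) •
          obsProd O hO t := by
        simp only [projObs, Finset.smul_sum, Finset.mul_sum, Finset.sum_smul, smul_smul]
        rw [Finset.sum_comm]
        simp only [bSign_comm s, mul_left_comm]
    _ = ∑ t ∈ suppSet R, (if s = t then (1 : ℂ) else 0) • obsProd O hO t :=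
        Finset.sum_congr rfl fun t ht => by rw [average_suppSet_bSign_mul_of_mem hs ht]
    _ = obsProd O hO s := by simp [hs]

theorem projObs_mul_projObs_of_disjoint (hsq : ∀ i, O i * O i = 1) (hRS : Disjoint R S)
    {u v : BV N} (hu : u ∈ suppSet R) (hv : v ∈ suppSet S) :
    projObs O hO R u * projObs O hO S v = projObs O hO (R ∪ S) (bvXor u v) := by
  have bSign_bvXor_bvXor {r s : BV N} (hr : r ∈ suppSet R) (hs : s ∈ suppSet S) :
      bSign (bvXor u v) (bvXor r s) = bSign u r * bSign v s := by
    rw [bSign_bvXor_left, bSign_bvXor_right, bSign_bvXor_right,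
      bSign_eq_one_of_disjoint hRS hu hs, bSign_eq_one_of_disjoint hRS.symm hv hr, mul_one, one_mul]
  simp only [projObs, smul_mul_smul_comm, Finset.sum_mul_sum, ← obsProd_bvXor O hO hsq,
    sum_suppSet_union hRS, Finset.card_union_of_disjoint hRS, pow_add, mul_inv]
  congr 1
  exact Finset.sum_congr rfl fun r hr => Finset.sum_congr rfl fun s hs => by
    rw [bSign_bvXor_bvXor hr hs]

theorem average_bSign_smul_obsProd_mul_mul_obsProd {w : BV N} (hw : w ∈ suppSet R)
    (A : Matrix ι ι ℂ) :
    ((2 : ℂ) ^ R.card)⁻¹ • ∑ s ∈ suppSet R, bSign s w • (obsProd O hO s * A * obsProd O hO s)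
      = ∑ a ∈ suppSet R, projObs O hO R (bvXor a w) * A * projObs O hO R a := by
  calc ((2 : ℂ) ^ R.card)⁻¹ • ∑ s ∈ suppSet R, bSign s w • (obsProd O hO s * A * obsProd O hO s)
      = ((2 : ℂ) ^ R.card)⁻¹ • ∑ s ∈ suppSet R, ∑ a ∈ suppSet R, ∑ b ∈ suppSet R,
          (bSign s (bvXor a w) * bSign s b) • (projObs O hO R b * A * projObs O hO R a) := by
        congr 1
        refine Finset.sum_congr rfl fun s hs => ?_
        simp only [obsProd_eq_sum_projObs O hO hs, Finset.sum_mul, Finset.mul_sum,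
          Finset.smul_sum, smul_mul_assoc, mul_smul_comm, smul_smul, bSign_bvXor_right]
        refine Finset.sum_congr rfl fun a _ => Finset.sum_congr rfl fun b _ => ?_
        congr 1
        ring
    _ = ∑ a ∈ suppSet R, ∑ b ∈ suppSet R,
          (((2 : ℂ) ^ R.card)⁻¹ * ∑ s ∈ suppSet R, bSign s (bvXor a w) * bSign s b) •
            (projObs O hO R b * A * projObs O hO R a) := by
        simp only [Finset.mul_sum, Finset.sum_smul, mul_smul, Finset.smul_sum]
        rw [Finset.sum_comm]
        exact Finset.sum_congr rfl fun a _ => Finset.sum_comm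
    _ = ∑ a ∈ suppSet R, projObs O hO R (bvXor a w) * A * projObs O hO R a := by
        refine Finset.sum_congr rfl fun a ha => ?_
        have haw := bvXor_mem_suppSet ha hw
        rw [Finset.sum_congr rfl fun b hb => by rw [average_suppSet_bSign_mul_of_mem haw hb]]
        simp [haw]

end Observables

section TensorProducts

variable {α β γ : Type*} [Fintype α] [Fintype β] [Fintype γ]

theorem kronecker_mulVec_tensVec (A : Matrix α α ℂ) (B : Matrix β β ℂ) (f : α → ℂ) (g : β → ℂ) :
    (A ⊗ₖ B) *ᵥ tensVec f g = tensVec (A *ᵥ f) (B *ᵥ g) := by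
  ext ⟨i, j⟩
  simp only [Matrix.mulVec, dotProduct, tensVec, Matrix.kroneckerMap_apply,
    Fintype.sum_prod_type, Finset.sum_mul_sum, mul_mul_mul_comm]

theorem one_kronecker_mulVec_apply [DecidableEq α] (M : Matrix β β ℂ) (f : α × β → ℂ) (i : α)
    (j : β) : (((1 : Matrix α α ℂ) ⊗ₖ M) *ᵥ f) (i, j) = (M *ᵥ fun k => f (i, k)) j := by
  simp [Matrix.mulVec, dotProduct, Fintype.sum_prod_type, Matrix.one_apply, ite_mul]

theorem qInner_eq_dotProduct (f g : α → ℂ) : qInner f g = star f ⬝ᵥ g := rfl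

theorem qInner_smul_mulVec_smul_mulVec (c : ℂ) (A B : Matrix α α ℂ) (ψ : α → ℂ) :
    qInner (c • A *ᵥ ψ) (c • B *ᵥ ψ) = star c * c * qInner ψ ((star A * B) *ᵥ ψ) := by
  simp only [qInner_eq_dotProduct, star_smul, smul_dotProduct, dotProduct_smul,
    Matrix.star_mulVec, ← Matrix.dotProduct_mulVec, Matrix.mulVec_mulVec, smul_eq_mul,
    Matrix.star_eq_conjTranspose]
  ring

theorem qInner_one_kronecker_one_kronecker_mulVec [DecidableEq α] [DecidableEq β]
    (M : Matrix γ γ ℂ) (f : α × β × γ → ℂ) :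
    qInner f (((1 : Matrix α α ℂ) ⊗ₖ ((1 : Matrix β β ℂ) ⊗ₖ M)) *ᵥ f)
      = ∑ y, ∑ x, ∑ x', M x x' * qInner (fun i => f (i, y, x)) (fun i => f (i, y, x')) := by
  simp only [qInner, Fintype.sum_prod_type, one_kronecker_mulVec_apply]
  simp only [Matrix.mulVec, dotProduct, Finset.mul_sum]
  rw [Finset.sum_comm]
  refine Finset.sum_congr rfl fun y _ => ?_
  rw [Finset.sum_comm]
  refine Finset.sum_congr rfl fun x _ => ?_
  rw [Finset.sum_comm]
  simp only [mul_left_comm]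

end TensorProducts

section Pauli

variable {N : ℕ}

theorem star_invSqrt2pow_mul_self (N : ℕ) :
    star (invSqrt2pow N) * invSqrt2pow N = ((2 : ℂ) ^ N)⁻¹ := by
  have inv_sqrt_two_sq : (Real.sqrt 2)⁻¹ * (Real.sqrt 2)⁻¹ = 2⁻¹ := by
    rw [← mul_inv, Real.mul_self_sqrt zero_le_two]
  rw [invSqrt2pow, star_pow, ← mul_pow, ← starRingEnd_apply, Complex.conj_ofReal,
    ← Complex.ofReal_mul, inv_sqrt_two_sq]
  simp

theorem phiPlus_apply (x y : BV N) : phiPlus N (x, y) = invSqrt2pow N * (1 : QOp N) x y := by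
  simp [phiPlus, Finset.sum_apply, tensVec, eVec, Matrix.one_apply]

theorem kronecker_one_mulVec_phiPlus_apply (B : QOp N) (y x : BV N) :
    ((B ⊗ₖ (1 : QOp N)) *ᵥ phiPlus N) (y, x) = invSqrt2pow N * B y x := by
  simp [Matrix.mulVec, dotProduct, Fintype.sum_prod_type, phiPlus_apply, Matrix.one_apply,
    mul_comm]

theorem sigmaX_apply (r y x : BV N) : sigmaX r y x = if r = bvXor y x then 1 else 0 := by
  simp only [sigmaX, Matrix.of_apply, eq_bvXor_iff]

theorem projPauliZ_eq_diagonal (S : Finset (Fin N)) (v : BV N) :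
    projPauliZ S v = Matrix.diagonal fun x => if bvXor v x ∈ suppSet Sᶜ then 1 else 0 := by
  ext x y
  simp only [projPauliZ, sigmaZ, ← average_suppSet_bSign_mul, Matrix.smul_apply, Matrix.sum_apply,
    Matrix.diagonal_apply, smul_eq_mul, bSign_comm v]
  split_ifs <;> simp

end Pauli

section Extraction

variable {N : ℕ} {ι : Type*} [Fintype ι] [DecidableEq ι] {R S : Finset (Fin N)}
  (X Z : Fin N → Matrix ι ι ℂ)
  (hX : ∀ i j, Commute (X i) (X j)) (hZ : ∀ i j, Commute (Z i) (Z j))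

theorem extractedVec_apply (ψ : ι → ℂ) (i : ι) (y x : BV N) :
    extractedVec X Z hX hZ ψ (i, y, x)
      = (invSqrt2pow N •
          (obsProd X hX (bvXor y x) * projObs Z hZ Finset.univ x) *ᵥ ψ) i := by
  have summand_apply (r s : BV N) : (((obsProd X hX r * obsProd Z hZ s) ⊗ₖ
      ((sigmaX r * sigmaZ s) ⊗ₖ (1 : QOp N))) *ᵥ tensVec ψ (phiPlus N)) (i, y, x)
        = if r = bvXor y x then
            invSqrt2pow N * (bSign x s * ((obsProd X hX r * obsProd Z hZ s) *ᵥ ψ) i) else 0 := by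
    rw [kronecker_mulVec_tensVec, tensVec, kronecker_one_mulVec_phiPlus_apply, sigmaZ,
      Matrix.mul_diagonal, sigmaX_apply, bSign_comm]
    split_ifs <;> ring
  simp only [extractedVec, projObs, suppSet_univ, Finset.card_univ, Fintype.card_fin,
    Pi.smul_apply, Finset.sum_apply, summand_apply, Finset.sum_ite_irrel, Finset.sum_const_zero,
    Finset.sum_ite_eq', Finset.mem_univ, if_true, mul_smul_comm, Finset.mul_sum, Matrix.smul_mulVec,
    Matrix.sum_mulVec, smul_eq_mul]
  simp only [mul_left_comm]

/-- The map `M ↦ ∑_{x,x'} ⟨e_x, M e_{x'}⟩ Π^Z_x X(x ⊕ x') Π^Z_{x'}` from operators on `Q_N` to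
operators on `H`. For binary observables, `Π^Z_x` is the joint spectral projector of all the `Z_i`
and this is the Heisenberg picture of the channel taking `ψ` to the reduced state of `Φ` on the
third register. -/
def extractionDual : QOp N →ₗ[ℂ] Matrix ι ι ℂ :=
  ∑ x, ∑ x', (Matrix.entryLinearMap ℂ ℂ x x').smulRight
    (projObs Z hZ Finset.univ x * obsProd X hX (bvXor x x') * projObs Z hZ Finset.univ x')

theorem extractionDual_apply (M : QOp N) :
    extractionDual X Z hX hZ M = ∑ x, ∑ x', M x x' •
      (projObs Z hZ Finset.univ x * obsProd X hX (bvXor x x') * projObs Z hZ Finset.univ x') := by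
  simp [extractionDual]

theorem qInner_extractedVec (hXobs : ∀ i, IsBinaryObs (X i)) (hZself : ∀ i, IsSelfAdjoint (Z i))
    (M : QOp N) (ψ : ι → ℂ) :
    qInner (extractedVec X Z hX hZ ψ)
        (((1 : Matrix ι ι ℂ) ⊗ₖ ((1 : QOp N) ⊗ₖ M)) *ᵥ extractedVec X Z hX hZ ψ)
      = qInner ψ (extractionDual X Z hX hZ M *ᵥ ψ) := by
  have star_mul_self (y x x' : BV N) :
      star (obsProd X hX (bvXor y x) * projObs Z hZ Finset.univ x)
          * (obsProd X hX (bvXor y x') * projObs Z hZ Finset.univ x')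
        = projObs Z hZ Finset.univ x * obsProd X hX (bvXor x x') * projObs Z hZ Finset.univ x' := by
    rw [star_mul, (isSelfAdjoint_obsProd X hX (fun i => (hXobs i).1) _).star_eq,
      (isSelfAdjoint_projObs Z hZ hZself _ _).star_eq, ← bvXor_bvXor_bvXor_left y x x',
      obsProd_bvXor X hX (fun i => (hXobs i).2) (bvXor y x)]
    simp only [mul_assoc]
  have norm_mul_card : star (invSqrt2pow N) * invSqrt2pow N * (Fintype.card (BV N) : ℂ) = 1 := by
    rw [star_invSqrt2pow_mul_self]
    simp
  have slice (y x : BV N) : (fun i => extractedVec X Z hX hZ ψ (i, y, x)) = invSqrt2pow N •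
      (obsProd X hX (bvXor y x) * projObs Z hZ Finset.univ x) *ᵥ ψ :=
    funext fun i => extractedVec_apply X Z hX hZ ψ i y x
  simp only [qInner_one_kronecker_one_kronecker_mulVec, slice, qInner_smul_mulVec_smul_mulVec,
    star_mul_self, mul_left_comm (M _ _), ← Finset.mul_sum, Finset.sum_const, Finset.card_univ,
    nsmul_eq_mul]
  rw [← mul_assoc, norm_mul_card, one_mul]
  simp only [extractionDual_apply, qInner_eq_dotProduct, Matrix.sum_mulVec, Matrix.smul_mulVec,
    dotProduct_sum, dotProduct_smul, smul_eq_mul]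

theorem extractionDual_sigmaX_mul_projPauliZ (S : Finset (Fin N)) (w v : BV N) :
    extractionDual X Z hX hZ (sigmaX w * projPauliZ S v)
      = ∑ a ∈ suppSet Sᶜ, projObs Z hZ Finset.univ (bvXor (bvXor v a) w) * obsProd X hX w
          * projObs Z hZ Finset.univ (bvXor v a) := by
  rw [sum_suppSet_bvXor v fun x => projObs Z hZ Finset.univ (bvXor x w) * obsProd X hX w
    * projObs Z hZ Finset.univ x]
  have bvXor_bvXor_self (x : BV N) : bvXor (bvXor x w) x = w := by
    rw [bvXor_comm, bvXor_involutive]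
  simp only [extractionDual_apply, projPauliZ_eq_diagonal, Matrix.mul_diagonal, sigmaX,
    Matrix.of_apply]
  rw [Finset.sum_comm]
  refine Finset.sum_congr rfl fun x _ => ?_
  by_cases hx : bvXor v x ∈ suppSet Sᶜ <;> simp [hx, bvXor_bvXor_self]

theorem extractionDual_sigmaX_mul_projPauliZ_eq_average (hsq : ∀ i, Z i * Z i = 1)
    (hRS : IsCompl R S) {w v : BV N} (hw : w ∈ suppSet R) (hv : v ∈ suppSet S) :
    extractionDual X Z hX hZ (sigmaX w * projPauliZ S v)
      = projObs Z hZ S v * (((2 : ℂ) ^ R.card)⁻¹ • ∑ s ∈ suppSet R,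
          bSign s w • (obsProd Z hZ s * obsProd X hX w * obsProd Z hZ s)) * projObs Z hZ S v := by
  rw [extractionDual_sigmaX_mul_projPauliZ, ← hRS.eq_compl,
    average_bSign_smul_obsProd_mul_mul_obsProd Z hZ hw, Finset.mul_sum, Finset.sum_mul]
  refine Finset.sum_congr rfl fun a ha => ?_
  have left_projObs : projObs Z hZ Finset.univ (bvXor (bvXor v a) w)
      = projObs Z hZ S v * projObs Z hZ R (bvXor a w) := by
    rw [projObs_mul_projObs_of_disjoint Z hZ hsq hRS.disjoint.symm hv (bvXor_mem_suppSet ha hw),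
      bvXor_assoc, show S ∪ R = Finset.univ from hRS.symm.sup_eq_top]
  have right_projObs : projObs Z hZ Finset.univ (bvXor v a)
      = projObs Z hZ R a * projObs Z hZ S v := by
    rw [projObs_mul_projObs_of_disjoint Z hZ hsq hRS.disjoint ha hv, bvXor_comm,
      show R ∪ S = Finset.univ from hRS.sup_eq_top]
  simp only [left_projObs, right_projObs, mul_assoc]

theorem extractionDual_projPauliX_mul_projPauliZ (hsq : ∀ i, Z i * Z i = 1) (hRS : IsCompl R S)
    (u : BV N) {v : BV N} (hv : v ∈ suppSet S) :
    extractionDual X Z hX hZ (projPauliX R u * projPauliZ S v)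
      = ((2 : ℂ) ^ R.card)⁻¹ • ∑ u' ∈ suppSet R,
          projObs Z hZ S v * obsProd Z hZ u' * projObs X hX R (bvXor u u')
            * obsProd Z hZ u' * projObs Z hZ S v := by
  calc extractionDual X Z hX hZ (projPauliX R u * projPauliZ S v)
      = ((2 : ℂ) ^ R.card)⁻¹ • ∑ w ∈ suppSet R,
          bSign u w • extractionDual X Z hX hZ (sigmaX w * projPauliZ S v) := by
        simp only [projPauliX, smul_mul_assoc, Finset.sum_mul, map_smul, map_sum]
    _ = ((2 : ℂ) ^ R.card)⁻¹ • ∑ w ∈ suppSet R, bSign u w • (projObs Z hZ S v *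
          (((2 : ℂ) ^ R.card)⁻¹ • ∑ u' ∈ suppSet R,
            bSign u' w • (obsProd Z hZ u' * obsProd X hX w * obsProd Z hZ u')) *
          projObs Z hZ S v) := by
        rw [Finset.sum_congr rfl fun w hw => by
          rw [extractionDual_sigmaX_mul_projPauliZ_eq_average X Z hX hZ hsq hRS hw hv]]
    _ = ((2 : ℂ) ^ R.card)⁻¹ • ∑ u' ∈ suppSet R,
          projObs Z hZ S v * obsProd Z hZ u' * projObs X hX R (bvXor u u')
            * obsProd Z hZ u' * projObs Z hZ S v := by
        generalize projObs Z hZ S v = P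
        congr 1
        simp only [projObs, bSign_bvXor_left, mul_smul, Finset.mul_sum, Finset.sum_mul,
          Finset.smul_sum, mul_smul_comm, smul_mul_assoc, mul_assoc]
        rw [Finset.sum_comm]
        exact Finset.sum_congr rfl fun s _ => Finset.sum_congr rfl fun w _ => smul_comm _ _ _

end Extraction

/-- measuring the Pauli observables `σx` on `R` and `σz` on `S` on the third
register of the extracted vector `Φ` reproduces the protocol-observable distribution. -/
theorem extractedVec_measurement {N : ℕ} {ι : Type*} [Fintype ι] [DecidableEq ι]
    (X Z : Fin N → Matrix ι ι ℂ)
    (hXobs : ∀ i, IsBinaryObs (X i)) (hZobs : ∀ i, IsBinaryObs (Z i))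
    (hX : ∀ i j, Commute (X i) (X j)) (hZ : ∀ i j, Commute (Z i) (Z j))
    (R S : Finset (Fin N)) (hRS : Disjoint R S) (hRScover : R ∪ S = Finset.univ)
    (ψ : ι → ℂ) (u v : BV N) (hu : u ∈ suppSet R) (hv : v ∈ suppSet S) :
    qInner (extractedVec X Z hX hZ ψ)
        (((1 : Matrix ι ι ℂ) ⊗ₖ ((1 : QOp N) ⊗ₖ (projPauliX R u * projPauliZ S v))).mulVec
          (extractedVec X Z hX hZ ψ))
      = ((2 : ℂ) ^ R.card)⁻¹ * ∑ u' ∈ suppSet R,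
          qInner ψ ((projObs Z hZ S v * obsProd Z hZ u' * projObs X hX R (bvXor u u')
              * obsProd Z hZ u' * projObs Z hZ S v).mulVec ψ) := by
  have hcompl : IsCompl R S := ⟨hRS, codisjoint_iff.2 hRScover⟩
  rw [qInner_extractedVec X Z hX hZ hXobs fun i => (hZobs i).1,
    extractionDual_projPauliX_mul_projPauliZ X Z hX hZ (fun i => (hZobs i).2) hcompl u hv]
  simp only [qInner_eq_dotProduct, Matrix.smul_mulVec, Matrix.sum_mulVec, dotProduct_smul,
    dotProduct_sum, smul_eq_mul]

end
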